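/- arXiv:1104.2810 — 2 statements merged into one kernel-verified Lean document; each statement's English description precedes it below -/
import Mathlib

section
/- Simply generated trees with superexponential branching weights (w_{n+1}/w_n → ∞) converge weakly, as N → ∞, in the local (left-ball) topology on the space Γ of rooted planar trees, to the point mass on the infinite star: the tree in which σ(s) = ∞ and every other vertex has degree 1. -/
open Filter

/-- Rooted planar trees (the tree hanging from the vertex `s` next to the root `r`;
the full tree of the paper with `N` edges corresponds to a `PTree` with `N` vertices,
plus the extra root `r` of degree 1 attached to the root `s` of the `PTree`). -/
inductive PTree : Type where
  | node : List PTree → PTree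

namespace PTree

/-- The (ordered) subtrees attached to the root. -/
def children : PTree → List PTree
  | node ts => ts

/-- Number of vertices of the `PTree`, i.e. the number `N` of edges of the paper's tree. -/
def size : PTree → ℕ
  | node ts => 1 + (ts.attach.map (fun t => size t.1)).sum
decreasing_by simp [PTree.node.sizeOf_spec]; have := List.sizeOf_lt_of_mem t.2; omega

/-- The weight `∏_{v ≠ r} w_{σ(v)}`: every vertex `v ≠ r` has degree `outdeg(v) + 1`. -/
noncomputable def weight (w : ℕ → ℝ) : PTree → ℝ
  | node ts => w (ts.length + 1) * (ts.attach.map (fun t => weight w t.1)).prod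
decreasing_by simp [PTree.node.sizeOf_spec]; have := List.sizeOf_lt_of_mem t.2; omega

/-- The number of vertices of outdegree `k`, i.e. the number `X_{k+1}` of vertices
(other than `r`) of degree `k+1`. -/
def countOutdeg (k : ℕ) : PTree → ℕ
  | node ts => (if ts.length = k then 1 else 0) + (ts.attach.map (fun t => countOutdeg k t.1)).sum
decreasing_by simp [PTree.node.sizeOf_spec]; have := List.sizeOf_lt_of_mem t.2; omega

/-- The maximal outdegree of a vertex of the tree. -/
def maxOutdeg : PTree → ℕ
  | node ts => max ts.length ((ts.attach.map (fun t => maxOutdeg t.1)).foldr max 0)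
decreasing_by simp [PTree.node.sizeOf_spec]; have := List.sizeOf_lt_of_mem t.2; omega

/-- Outdegree of the first (leftmost) child `s₁` of `s` (0 if there is none). -/
def firstChildOutdeg : PTree → ℕ
  | node [] => 0
  | node (t :: _) => t.children.length

end PTree

/-- The partition function `Z_N = Σ_{τ ∈ Γ_N} ∏_{v ∈ V(τ)∖{r}} w_{σ(v)}`. -/
noncomputable def Zfun (w : ℕ → ℝ) (N : ℕ) : ℝ :=
  ∑' t : {t : PTree // t.size = N}, t.1.weight w

/-- `ν_N(P)`: probability of the event `P` under the simply generated measure `ν_N`. -/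
noncomputable def nu (w : ℕ → ℝ) (N : ℕ) (P : PTree → Prop) : ℝ :=
  (∑' t : {t : PTree // t.size = N ∧ P t}, t.1.weight w) / Zfun w N

/-!
The depth-first exploration of a tree (the Otter–Dwass formula) gives `N Z_N = [X ^ (N - 1)] φ ^ N`
with `φ = ∑ d, w_{d+1} X ^ d`, so `Z_N` counts weighted configurations of `N - 1` balls in `N`
boxes. If the weights grow superexponentially, it pays to pile up the balls, and the expected
fraction of nonempty boxes tends to `0`. By the same formula the outdegree of the root is a
size-biased box, which is therefore large, while the next `k` outdegrees are those of `k` further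
boxes, all of which are empty with probability tending to `1` by the union bound.
-/

namespace SimplyGenerated

open PowerSeries Asymptotics
open scoped Topology

section CoeffwiseOrder

variable {R : Type*}

/-- The coefficientwise order on formal power series. It makes `R⟦X⟧` an ordered ring, so that
inequalities between coefficients can be derived from algebra with whole series. -/
scoped instance coeffwiseOrder [Semiring R] [PartialOrder R] : PartialOrder R⟦X⟧ where
  le f g := ∀ n, coeff n f ≤ coeff n g
  le_refl _ _ := le_rfl
  le_trans _ _ _ hfg hgh n := (hfg n).trans (hgh n)
  le_antisymm _ _ hfg hgf := PowerSeries.ext fun n ↦ (hfg n).antisymm (hgf n)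

lemma coeff_le_coeff [Semiring R] [PartialOrder R] {f g : R⟦X⟧} (h : f ≤ g) (n : ℕ) :
    coeff n f ≤ coeff n g :=
  h n

lemma nonneg_iff_coeff_nonneg [Semiring R] [PartialOrder R] {f : R⟦X⟧} :
    0 ≤ f ↔ ∀ n, 0 ≤ coeff n f :=
  forall_congr' fun _ ↦ by rw [map_zero]

lemma coeff_nonneg [Semiring R] [PartialOrder R] {f : R⟦X⟧} (hf : 0 ≤ f) (n : ℕ) :
    0 ≤ coeff n f :=
  nonneg_iff_coeff_nonneg.1 hf n

lemma C_nonneg [Semiring R] [PartialOrder R] {a : R} (ha : 0 ≤ a) : 0 ≤ (C a : R⟦X⟧) :=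
  nonneg_iff_coeff_nonneg.2 fun n ↦ by rw [coeff_C]; split_ifs <;> simp [ha]

lemma X_nonneg [Semiring R] [PartialOrder R] [ZeroLEOneClass R] : 0 ≤ (X : R⟦X⟧) :=
  nonneg_iff_coeff_nonneg.2 fun n ↦ by rw [coeff_X]; split_ifs <;> simp

scoped instance [Semiring R] [PartialOrder R] [IsOrderedAddMonoid R] :
    IsOrderedAddMonoid R⟦X⟧ where
  add_le_add_left _ _ hfg h n := by simpa only [map_add] using add_le_add_left (hfg n) _

scoped instance [Ring R] [PartialOrder R] [IsOrderedRing R] : IsOrderedRing R⟦X⟧ :=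
  have : ZeroLEOneClass R⟦X⟧ := ⟨map_one (C (R := R)) ▸ C_nonneg zero_le_one⟩
  .of_mul_nonneg fun f g hf hg ↦ nonneg_iff_coeff_nonneg.2 fun n ↦ by
    rw [coeff_mul]
    exact Finset.sum_nonneg fun x _ ↦
      mul_nonneg (coeff_nonneg hf _) (coeff_nonneg hg _)

end CoeffwiseOrder

lemma coeff_mul_eq_sum_range {R : Type*} [Semiring R] (f g : R⟦X⟧) (n : ℕ) :
    coeff n (f * g) = ∑ d ∈ Finset.range (n + 1), coeff d f * coeff n (X ^ d * g) := by
  rw [coeff_mul, Finset.Nat.sum_antidiagonal_eq_sum_range_succ_mk]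
  refine Finset.sum_congr rfl fun d hd ↦ ?_
  rw [coeff_X_pow_mul', if_pos (Finset.mem_range_succ_iff.1 hd)]

section EulerDerivative

variable {R : Type*}

section CommSemiring

variable [CommSemiring R]

/-- The Euler operator `X d/dX`, which multiplies the `n`-th coefficient by `n`. -/
noncomputable def eulerDeriv (f : R⟦X⟧) : R⟦X⟧ :=
  X * derivative R f

lemma coeff_eulerDeriv (f : R⟦X⟧) (n : ℕ) : coeff n (eulerDeriv f) = n * coeff n f := by
  cases n with
  | zero => simp [eulerDeriv]
  | succ n => simp [eulerDeriv, coeff_succ_X_mul, mul_comm, coeff_derivative]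

lemma eulerDeriv_mul (f g : R⟦X⟧) : eulerDeriv (f * g) = f * eulerDeriv g + eulerDeriv f * g := by
  simp only [eulerDeriv, Derivation.leibniz, smul_eq_mul]
  ring

lemma eulerDeriv_pow (f : R⟦X⟧) (n : ℕ) :
    eulerDeriv (f ^ n) = C (n : R) * (eulerDeriv f * f ^ (n - 1)) := by
  simp only [eulerDeriv, derivative_pow, map_natCast]
  ring

lemma eulerDeriv_X_pow (n : ℕ) : eulerDeriv (X ^ n : R⟦X⟧) = C (n : R) * X ^ n := by
  ext m
  rw [coeff_eulerDeriv, coeff_C_mul, coeff_X_pow]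
  split_ifs with h <;> simp [h]

lemma succ_mul_coeff_eulerDeriv_mul_pow (f : R⟦X⟧) (m n : ℕ) :
    (n + 1) * coeff m (eulerDeriv f * f ^ n) = m * coeff m (f ^ (n + 1)) := by
  rw [← coeff_eulerDeriv, eulerDeriv_pow, coeff_C_mul, Nat.add_sub_cancel, Nat.cast_succ]

lemma succ_mul_coeff_mul_X_pow_mul_pow (f : R⟦X⟧) (j n : ℕ) :
    ((n : R) + 1) * coeff n ((C (j : R) * f + eulerDeriv f) * (X ^ j * f ^ n)) =
      n * ((j + 1) * coeff n (X ^ j * f ^ (n + 1))) := by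
  have hX : (n : R) * coeff n (X ^ j * f ^ (n + 1)) = j * coeff n (X ^ j * f ^ (n + 1)) +
      (n + 1) * coeff n (X ^ j * (eulerDeriv f * f ^ n)) := by
    rw [← coeff_eulerDeriv, eulerDeriv_mul, eulerDeriv_pow, eulerDeriv_X_pow, map_add,
      mul_left_comm, mul_assoc, coeff_C_mul, coeff_C_mul, Nat.add_sub_cancel, Nat.cast_succ,
      add_comm]
  have hsplit : (C (j : R) * f + eulerDeriv f) * (X ^ j * f ^ n) =
      C (j : R) * (X ^ j * f ^ (n + 1)) + X ^ j * (eulerDeriv f * f ^ n) := by ring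
  rw [hsplit, map_add, coeff_C_mul]
  calc ((n : R) + 1) * (j * coeff n (X ^ j * f ^ (n + 1)) +
        coeff n (X ^ j * (eulerDeriv f * f ^ n)))
      = n * j * coeff n (X ^ j * f ^ (n + 1)) + (j * coeff n (X ^ j * f ^ (n + 1)) +
          (n + 1) * coeff n (X ^ j * (eulerDeriv f * f ^ n))) := by ring
    _ = n * ((j + 1) * coeff n (X ^ j * f ^ (n + 1))) := by rw [← hX]; ring

end CommSemiring

section Ordered

variable [CommRing R] [LinearOrder R] [IsStrictOrderedRing R] {f g : R⟦X⟧}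

lemma eulerDeriv_nonneg (hf : 0 ≤ f) : 0 ≤ eulerDeriv f :=
  nonneg_iff_coeff_nonneg.2 fun n ↦ by
    rw [coeff_eulerDeriv]
    exact mul_nonneg n.cast_nonneg (coeff_nonneg hf n)

lemma coeff_eulerDeriv_mul_pow_self_le (hf : 0 ≤ f) (n : ℕ) :
    coeff n (eulerDeriv f * f ^ n) ≤ coeff n (f ^ (n + 1)) := by
  have := succ_mul_coeff_eulerDeriv_mul_pow f n n
  have := coeff_nonneg (pow_nonneg hf (n + 1)) n
  nlinarith

lemma coeff_mul_eulerDeriv_le (hf : 0 ≤ f) (hg : 0 ≤ g) (n : ℕ) :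
    coeff n (g * eulerDeriv f) ≤ n * coeff n (g * f) := by
  rw [← coeff_eulerDeriv, eulerDeriv_mul, map_add]
  exact le_add_of_nonneg_right
    (coeff_nonneg (mul_nonneg (eulerDeriv_nonneg hg) hf) n)

lemma coeff_mul_eulerDeriv_mul_pow_pred_le (hf : 0 ≤ f) (hg : 0 ≤ g) (n : ℕ) :
    coeff n (g * (eulerDeriv f * f ^ (n - 1))) ≤ coeff n (g * f ^ n) := by
  rcases Nat.eq_zero_or_pos n with rfl | hn
  · simpa [eulerDeriv] using coeff_nonneg hg 0
  · have h := coeff_mul_eulerDeriv_le (pow_nonneg hf n) hg n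
    rw [eulerDeriv_pow, mul_left_comm, coeff_C_mul] at h
    exact le_of_mul_le_mul_left h (Nat.cast_pos.2 hn)

end Ordered

end EulerDerivative

section DropConst

variable {R : Type*}

/-- The series `f - f(0)`. If `f` is the weight of the content of one box, then `dropConst f` is
the weight restricted to nonempty boxes. -/
noncomputable def dropConst [Ring R] (f : R⟦X⟧) : R⟦X⟧ :=
  f - C (constantCoeff f)

lemma coeff_dropConst [Ring R] (f : R⟦X⟧) (n : ℕ) :
    coeff n (dropConst f) = if n = 0 then 0 else coeff n f := by
  rw [dropConst, map_sub, coeff_C]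
  split_ifs with h <;> simp [h]

lemma constantCoeff_nonneg [Semiring R] [PartialOrder R] {f : R⟦X⟧} (hf : 0 ≤ f) :
    0 ≤ constantCoeff f := by
  simpa using coeff_nonneg hf 0

lemma C_constantCoeff_le [Semiring R] [PartialOrder R] {f : R⟦X⟧} (hf : 0 ≤ f) :
    C (constantCoeff f) ≤ f := fun n ↦ by
  rw [coeff_C]
  split_ifs with h
  · rw [h, coeff_zero_eq_constantCoeff_apply]
  · exact coeff_nonneg hf n

lemma dropConst_nonneg [Ring R] [PartialOrder R] {f : R⟦X⟧} (hf : 0 ≤ f) : 0 ≤ dropConst f :=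
  nonneg_iff_coeff_nonneg.2 fun n ↦ by
    rw [coeff_dropConst]
    split_ifs
    exacts [le_rfl, coeff_nonneg hf n]

variable [CommRing R] [PartialOrder R] [IsOrderedRing R] {f : R⟦X⟧}

lemma constantCoeff_pow_mul_coeff_pow_le (hf : 0 ≤ f) (m n k : ℕ) :
    constantCoeff f ^ k * coeff m (f ^ n) ≤ coeff m (f ^ (n + k)) := by
  rw [← coeff_C_mul, map_pow, pow_add, mul_comm]
  refine coeff_le_coeff ?_ m
  have hc := C_nonneg (constantCoeff_nonneg hf)
  exact mul_le_mul_of_nonneg_left (pow_le_pow_left₀ hc (C_constantCoeff_le hf) k)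
    (pow_nonneg hf n)

-- Bernoulli's inequality for `f + (c - f)`, where `c` is the constant term of `f`.
lemma pow_le_C_constantCoeff_pow_add (hf : 0 ≤ f) (k : ℕ) :
    f ^ k ≤ C (constantCoeff f) ^ k + k * (dropConst f * f ^ (k - 1)) := by
  have hc := C_nonneg (constantCoeff_nonneg hf)
  have hadd : f + -dropConst f = C (constantCoeff f) := by rw [dropConst]; ring
  have bernoulli := (Commute.all f (-dropConst f)).pow_add_mul_le_add_pow_of_sq_nonneg hf
    (by rw [neg_sq]; exact pow_nonneg (dropConst_nonneg hf) 2)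
    (by rw [hadd]; exact pow_nonneg hc 2)
    (by rw [two_mul, add_assoc, hadd]; exact add_nonneg hf hc) k
  rw [hadd] at bernoulli
  linear_combination bernoulli

end DropConst

lemma mul_pow_le_mul_pow_add {R : Type*} [CommRing R] [PartialOrder R] [IsOrderedRing R]
    {f g x y : R} (hg : 0 ≤ g) (hgf : g ≤ f) (hy : 0 ≤ y) (h : x * (f - g) ≤ y * (f - g)) (n : ℕ) :
    x * f ^ n ≤ x * g ^ n + y * f ^ n := by
  have hgeom : 0 ≤ ∑ i ∈ Finset.range n, f ^ i * g ^ (n - 1 - i) :=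
    Finset.sum_nonneg fun i _ ↦ mul_nonneg (pow_nonneg (hg.trans hgf) _) (pow_nonneg hg _)
  have hdiff : x * (f ^ n - g ^ n) ≤ y * (f ^ n - g ^ n) := by
    simpa only [← (Commute.all f g).mul_geom_sum₂, mul_assoc] using
      mul_le_mul_of_nonneg_right h hgeom
  have hyg : 0 ≤ y * g ^ n := mul_nonneg hy (pow_nonneg hg n)
  linear_combination hdiff + hyg

lemma coeff_coe_pow_le_eval_one_pow {R : Type*} [CommRing R] [PartialOrder R] [IsOrderedRing R]
    {q : Polynomial R} (hq : 0 ≤ (q : R⟦X⟧)) (m n : ℕ) :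
    coeff m ((q : R⟦X⟧) ^ n) ≤ q.eval 1 ^ n := by
  have hpow : ∀ i, 0 ≤ (q ^ n).coeff i := fun i ↦ by
    simpa only [← Polynomial.coe_pow, Polynomial.coeff_coe] using coeff_nonneg (pow_nonneg hq n) i
  rw [← Polynomial.coe_pow, Polynomial.coeff_coe, ← Polynomial.eval_pow,
    Polynomial.eval_eq_sum_range' (n := max m (q ^ n).natDegree + 1) (by omega)]
  simp only [one_pow, mul_one]
  exact Finset.single_le_sum (fun i _ ↦ hpow i) (Finset.mem_range.2 (by omega))

section Trunc

variable {R : Type*}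

lemma trunc_nonneg [Semiring R] [PartialOrder R] {f : R⟦X⟧} (hf : 0 ≤ f) (L : ℕ) :
    0 ≤ (trunc L f : R⟦X⟧) :=
  nonneg_iff_coeff_nonneg.2 fun n ↦ by
    rw [Polynomial.coeff_coe, coeff_trunc]
    split_ifs
    exacts [coeff_nonneg hf n, le_rfl]

lemma coeff_sub_trunc [Ring R] (f : R⟦X⟧) (L n : ℕ) :
    coeff n (f - (trunc L f : R⟦X⟧)) = if n < L then 0 else coeff n f := by
  rw [map_sub, Polynomial.coeff_coe, coeff_trunc]
  split_ifs <;> simp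

lemma trunc_le [Semiring R] [PartialOrder R] {f : R⟦X⟧} (hf : 0 ≤ f) (L : ℕ) :
    (trunc L f : R⟦X⟧) ≤ f := fun n ↦ by
  rw [Polynomial.coeff_coe, coeff_trunc]
  split_ifs
  exacts [le_rfl, coeff_nonneg hf n]

end Trunc

section Superexponential

variable {u : ℕ → ℝ}

lemma eventually_ne_zero_of_ratio_tendsto (hu : Tendsto (fun n ↦ u (n + 1) / u n) atTop atTop) :
    ∀ᶠ n in atTop, u n ≠ 0 := by
  filter_upwards [hu.eventually_gt_atTop 0] with n hn h
  simp [h] at hn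

lemma isLittleO_succ_of_ratio_tendsto (hu : Tendsto (fun n ↦ u (n + 1) / u n) atTop atTop) :
    u =o[atTop] fun n ↦ u (n + 1) := by
  refine isLittleO_of_tendsto' ?_ (hu.inv_tendsto_atTop.congr fun n ↦ inv_div _ _)
  filter_upwards [(tendsto_add_atTop_nat 1).eventually (eventually_ne_zero_of_ratio_tendsto hu)]
    with n hn h using absurd h hn

lemma isLittleO_add_of_ratio_tendsto (hu : Tendsto (fun n ↦ u (n + 1) / u n) atTop atTop)
    {a : ℕ} (ha : 1 ≤ a) : u =o[atTop] fun n ↦ u (n + a) := by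
  have hsucc := isLittleO_succ_of_ratio_tendsto hu
  induction a, ha using Nat.le_induction with
  | base => exact hsucc
  | succ a _ ih => exact ih.trans (hsucc.comp_tendsto (tendsto_add_atTop_nat a))

lemma pow_isLittleO_of_ratio_tendsto (hu : Tendsto (fun n ↦ u (n + 1) / u n) atTop atTop) (c : ℝ) :
    (fun n ↦ c ^ n) =o[atTop] u := by
  have hne := eventually_ne_zero_of_ratio_tendsto hu
  rcases eq_or_ne c 0 with rfl | hc
  · refine (isLittleO_zero u atTop).congr' ?_ .rfl
    filter_upwards [eventually_ne_atTop 0] with n hn using (zero_pow hn).symm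
  refine isLittleO_of_tendsto' (hne.mono fun n hn h ↦ absurd h hn)
    (summable_of_ratio_test_tendsto_lt_one zero_lt_one ?_ ?_).tendsto_atTop_zero
  · filter_upwards [hne] with n hn using div_ne_zero (pow_ne_zero n hc) hn
  · refine (hu.const_div_atTop c).norm.congr' ?_ |>.trans (by rw [norm_zero])
    filter_upwards with n
    rw [← norm_div, pow_succ]
    congr 1
    field_simp

end Superexponential

section Occupancy

variable {f : ℝ⟦X⟧}

lemma exists_X_pow_mul_sub_trunc_le (hf : 0 ≤ f)
    (hratio : Tendsto (fun n ↦ coeff (n + 1) f / coeff n f) atTop atTop) {a : ℕ} (ha : 1 ≤ a)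
    {ε : ℝ} (hε : 0 < ε) :
    ∃ L, X ^ a * (f - (trunc L f : ℝ⟦X⟧)) ≤ C ε * (f - (trunc L f : ℝ⟦X⟧)) := by
  obtain ⟨L, hL⟩ := ((isLittleO_iff.1
    (isLittleO_add_of_ratio_tendsto (u := fun n ↦ coeff n f) hratio ha)) hε).exists_forall_of_atTop
  refine ⟨L, fun n ↦ ?_⟩
  have hn : 0 ≤ ε * coeff n f := mul_nonneg hε.le (coeff_nonneg hf n)
  rw [coeff_C_mul, coeff_X_pow_mul', coeff_sub_trunc, coeff_sub_trunc]
  by_cases han : a ≤ n ∧ L ≤ n - a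
  · have h := hL (n - a) han.2
    rw [Nat.sub_add_cancel han.1, Real.norm_of_nonneg (coeff_nonneg hf _),
      Real.norm_of_nonneg (coeff_nonneg hf _)] at h
    rwa [if_pos han.1, if_neg (by omega), if_neg (by omega)]
  · split_ifs <;> first | omega | simpa only [mul_zero] using hn | simp only [mul_zero, le_refl]

lemma constantCoeff_pow_mul_coeff_le (hf : 0 ≤ f) (n : ℕ) :
    constantCoeff f ^ n * coeff n f ≤ coeff n (f ^ (n + 1)) := by
  simpa only [pow_one, add_comm] using constantCoeff_pow_mul_coeff_pow_le hf n 1 n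

lemma eventually_coeff_pow_succ_pos (hf : 0 ≤ f) (h0 : 0 < constantCoeff f)
    (hratio : Tendsto (fun n ↦ coeff (n + 1) f / coeff n f) atTop atTop) :
    ∀ᶠ n in atTop, 0 < coeff n (f ^ (n + 1)) := by
  filter_upwards [eventually_ne_zero_of_ratio_tendsto (u := fun n ↦ coeff n f) hratio] with n hn
  have hpos : 0 < coeff n f := (coeff_nonneg hf n).lt_of_ne' hn
  exact (by positivity : 0 < constantCoeff f ^ n * coeff n f).trans_le
    (constantCoeff_pow_mul_coeff_le hf n)

lemma pow_isLittleO_coeff_pow_succ (hf : 0 ≤ f) (h0 : 0 < constantCoeff f)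
    (hratio : Tendsto (fun n ↦ coeff (n + 1) f / coeff n f) atTop atTop) (b : ℝ) :
    (fun n ↦ b ^ n) =o[atTop] fun n ↦ coeff n (f ^ (n + 1)) := by
  have hlittle : (fun n ↦ b ^ n) =o[atTop] fun n ↦ constantCoeff f ^ n * coeff n f := by
    refine ((isBigO_refl (fun n ↦ constantCoeff f ^ n) atTop).mul_isLittleO
      (pow_isLittleO_of_ratio_tendsto (u := fun n ↦ coeff n f) hratio
        (b / constantCoeff f))).congr_left fun n ↦ ?_
    rw [← mul_pow, mul_div_cancel₀ _ h0.ne']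
  refine hlittle.trans_isBigO (isBigO_of_le _ fun n ↦ ?_)
  have hn : 0 ≤ constantCoeff f ^ n * coeff n f :=
    mul_nonneg (pow_nonneg h0.le n) (coeff_nonneg hf n)
  have hle := constantCoeff_pow_mul_coeff_le hf n
  rwa [Real.norm_of_nonneg hn, Real.norm_of_nonneg (hn.trans hle)]

-- If every box is small, there are only exponentially many weighted configurations; if some box is
-- large, `a` more balls fit into it at a gain in weight that exceeds any given factor.
lemma coeff_X_pow_mul_pow_isLittleO (hf : 0 ≤ f) (h0 : 0 < constantCoeff f)
    (hratio : Tendsto (fun n ↦ coeff (n + 1) f / coeff n f) atTop atTop) {a : ℕ} (ha : 1 ≤ a) :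
    (fun n ↦ coeff n (X ^ a * f ^ n)) =o[atTop] fun n ↦ coeff n (f ^ (n + 1)) := by
  refine isLittleO_iff.2 fun ε hε ↦ ?_
  have hδ : 0 < ε / 2 * constantCoeff f := by positivity
  obtain ⟨L, hL⟩ := exists_X_pow_mul_sub_trunc_le hf hratio ha hδ
  filter_upwards [isLittleO_iff.1 (pow_isLittleO_coeff_pow_succ hf h0 hratio ((trunc L f).eval 1))
    (half_pos hε)] with n hn
  have hS : 0 ≤ coeff n (f ^ (n + 1)) := coeff_nonneg (pow_nonneg hf _) n
  have hsplit := coeff_le_coeff (mul_pow_le_mul_pow_add (trunc_nonneg hf L) (trunc_le hf L)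
    (C_nonneg hδ.le) hL n) n
  have hsmall : coeff n (X ^ a * (trunc L f : ℝ⟦X⟧) ^ n) ≤ |(trunc L f).eval 1 ^ n| := by
    rw [coeff_X_pow_mul']
    split_ifs
    exacts [(coeff_coe_pow_le_eval_one_pow (trunc_nonneg hf L) _ n).trans (le_abs_self _),
      abs_nonneg _]
  have hlarge : constantCoeff f * coeff n (f ^ n) ≤ coeff n (f ^ (n + 1)) := by
    simpa only [pow_one] using constantCoeff_pow_mul_coeff_pow_le hf n n 1
  rw [Real.norm_of_nonneg hS] at hn ⊢
  rw [Real.norm_of_nonneg (coeff_nonneg (mul_nonneg (pow_nonneg X_nonneg a) (pow_nonneg hf n)) n)]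
  rw [map_add, coeff_C_mul] at hsplit
  calc coeff n (X ^ a * f ^ n)
      ≤ ε / 2 * coeff n (f ^ (n + 1)) + ε / 2 * (constantCoeff f * coeff n (f ^ n)) := by
        rw [Real.norm_eq_abs] at hn
        linarith
    _ ≤ ε / 2 * coeff n (f ^ (n + 1)) + ε / 2 * coeff n (f ^ (n + 1)) := by gcongr
    _ = ε * coeff n (f ^ (n + 1)) := by ring

-- Markov's inequality for the content of a box.
lemma dropConst_le_sum_add_eulerDeriv (hf : 0 ≤ f) {K : ℕ} (hK : 0 < K) :
    dropConst f ≤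
      ∑ a ∈ Finset.Icc 1 K, C (coeff a f) * X ^ a + C (K : ℝ)⁻¹ * eulerDeriv f := fun n ↦ by
  have hn := coeff_nonneg hf n
  have hsum : coeff n (∑ a ∈ Finset.Icc 1 K, C (coeff a f) * X ^ a) =
      if 1 ≤ n ∧ n ≤ K then coeff n f else 0 := by
    simp only [map_sum, coeff_C_mul, coeff_X_pow, mul_ite, mul_one, mul_zero, Finset.sum_ite_eq,
      Finset.mem_Icc]
  have hmarkov : 0 ≤ (K : ℝ)⁻¹ * (n * coeff n f) := by positivity
  rw [map_add, hsum, coeff_C_mul, coeff_eulerDeriv, coeff_dropConst]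
  split_ifs with h0 hmem hmem
  · omega
  · rwa [zero_add]
  · exact le_add_of_nonneg_right hmarkov
  · have hKn : (K : ℝ) ≤ n := by exact_mod_cast (by omega : K ≤ n)
    rw [zero_add, le_inv_mul_iff₀ (by positivity)]
    gcongr

lemma coeff_dropConst_mul_pow_isLittleO (hf : 0 ≤ f) (h0 : 0 < constantCoeff f)
    (hratio : Tendsto (fun n ↦ coeff (n + 1) f / coeff n f) atTop atTop) :
    (fun n ↦ coeff n (dropConst f * f ^ n)) =o[atTop] fun n ↦ coeff n (f ^ (n + 1)) := by
  refine isLittleO_iff.2 fun ε hε ↦ ?_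
  obtain ⟨K, hK⟩ := exists_nat_gt (2 / ε)
  have hK0 : (0 : ℝ) < K := (by positivity : 0 < 2 / ε).trans hK
  have hKε : (K : ℝ)⁻¹ ≤ ε / 2 := by
    rw [← inv_div]; exact inv_anti₀ (by positivity) hK.le
  have hsum : (fun n ↦ ∑ a ∈ Finset.Icc 1 K, coeff a f * coeff n (X ^ a * f ^ n)) =o[atTop]
      fun n ↦ coeff n (f ^ (n + 1)) := by
    simpa only [Finset.sum_fn] using IsLittleO.sum fun a ha ↦
      (coeff_X_pow_mul_pow_isLittleO hf h0 hratio
        (Finset.mem_Icc.1 ha).1).const_mul_left (coeff a f)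
  filter_upwards [isLittleO_iff.1 hsum (half_pos hε)] with n hn
  have hS : 0 ≤ coeff n (f ^ (n + 1)) := coeff_nonneg (pow_nonneg hf _) n
  have hmarkov := coeff_le_coeff (mul_le_mul_of_nonneg_right
    (dropConst_le_sum_add_eulerDeriv hf (Nat.cast_pos.1 hK0)) (pow_nonneg hf n)) n
  simp only [add_mul, Finset.sum_mul, map_add, map_sum, mul_assoc, coeff_C_mul] at hmarkov
  rw [Real.norm_of_nonneg hS] at hn ⊢
  rw [Real.norm_of_nonneg
    (coeff_nonneg (mul_nonneg (dropConst_nonneg hf) (pow_nonneg hf n)) n)]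
  calc coeff n (dropConst f * f ^ n)
      ≤ ε / 2 * coeff n (f ^ (n + 1)) + (K : ℝ)⁻¹ * coeff n (eulerDeriv f * f ^ n) :=
        hmarkov.trans (add_le_add_left ((le_abs_self _).trans hn) _)
    _ ≤ ε / 2 * coeff n (f ^ (n + 1)) + ε / 2 * coeff n (f ^ (n + 1)) := by
        have := coeff_nonneg (mul_nonneg (eulerDeriv_nonneg hf) (pow_nonneg hf n)) n
        have := coeff_eulerDeriv_mul_pow_self_le hf n
        gcongr
    _ = ε * coeff n (f ^ (n + 1)) := by ring

end Occupancy

section Shift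

/-- The `k`-fold left shift of a power series: the coefficient of `X ^ d` is that of `X ^ (k + d)`
in `f`. -/
noncomputable def shift {R : Type*} [Semiring R] (k : ℕ) (f : R⟦X⟧) : R⟦X⟧ :=
  mk fun d ↦ coeff (k + d) f

variable {R : Type*} [CommRing R] [LinearOrder R] [IsStrictOrderedRing R] {f : R⟦X⟧}

lemma eulerDeriv_le_X_pow_mul_eulerDeriv_shift_add (hf : 0 ≤ f) (k : ℕ) :
    eulerDeriv f ≤ X ^ k * eulerDeriv (shift k f) + C (k : R) * dropConst f := fun n ↦ by
  have hn := coeff_nonneg hf n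
  rw [map_add, coeff_C_mul, coeff_X_pow_mul', coeff_dropConst, coeff_eulerDeriv, coeff_eulerDeriv,
    shift, coeff_mk]
  split_ifs with hkn h0 h0
  · simp [h0]
  · rw [Nat.add_sub_cancel' hkn, ← add_mul, Nat.cast_sub hkn, sub_add_cancel]
  · simp [h0]
  · rw [zero_add]
    gcongr
    omega

-- On the left, a ball is marked in a distinguished box. In the first term of the bound this box
-- holds at least `k` balls and `k` prescribed other boxes are empty.
lemma eulerDeriv_mul_pow_le (hf : 0 ≤ f) (k n : ℕ) :
    eulerDeriv f * f ^ (n + k) ≤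
      C (constantCoeff f) ^ k * (X ^ k * (eulerDeriv (shift k f) * f ^ n)) +
        C (k : R) * (dropConst f * f ^ (n + k) +
          dropConst f * (eulerDeriv f * f ^ (n + k - 1))) := by
  have hfn := pow_nonneg hf n
  have hck := pow_nonneg (C_nonneg (constantCoeff_nonneg hf)) k
  have hk : 0 ≤ C (k : R) := C_nonneg k.cast_nonneg
  have bernoulli := mul_le_mul_of_nonneg_left (pow_le_C_constantCoeff_pow_add hf k)
    (mul_nonneg (eulerDeriv_nonneg hf) hfn)
  have hshift := mul_le_mul_of_nonneg_right (eulerDeriv_le_X_pow_mul_eulerDeriv_shift_add hf k)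
    (mul_nonneg hck hfn)
  have hpow := mul_le_mul_of_nonneg_left
    (pow_le_pow_left₀ (C_nonneg (constantCoeff_nonneg hf)) (C_constantCoeff_le hf) k)
    (mul_nonneg hk (mul_nonneg (dropConst_nonneg hf) hfn))
  have hpred : (k : R⟦X⟧) * f ^ (n + k - 1) = k * (f ^ n * f ^ (k - 1)) := by
    rcases k.eq_zero_or_pos with rfl | hk
    · simp
    · rw [← pow_add, Nat.add_sub_assoc hk]
  rw [map_natCast] at *
  linear_combination bernoulli + hshift + hpow - dropConst f * eulerDeriv f * hpred

lemma coeff_eulerDeriv_mul_pow_sub_le (hf : 0 ≤ f) (k n : ℕ) :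
    coeff (n + k) (eulerDeriv f * f ^ (n + k)) - 2 * k * coeff (n + k) (dropConst f * f ^ (n + k)) ≤
      constantCoeff f ^ k * coeff n (eulerDeriv (shift k f) * f ^ n) := by
  have h := coeff_le_coeff (eulerDeriv_mul_pow_le hf k n) (n + k)
  have hpred := mul_le_mul_of_nonneg_left
    (coeff_mul_eulerDeriv_mul_pow_pred_le hf (dropConst_nonneg hf) (n + k)) (k.cast_nonneg (α := R))
  rw [map_add, ← map_pow, coeff_C_mul, coeff_C_mul, coeff_X_pow_mul, map_add] at h
  linarith

lemma mul_coeff_pow_succ_sub_le (hf : 0 ≤ f) (k n : ℕ) :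
    n * coeff (n + k) (f ^ (n + k + 1)) -
        2 * k * (n + k + 1) * coeff (n + k) (dropConst f * f ^ (n + k)) ≤
      (n + k + 1) * (constantCoeff f ^ k * coeff n (eulerDeriv (shift k f) * f ^ n)) := by
  have h := mul_le_mul_of_nonneg_left (coeff_eulerDeriv_mul_pow_sub_le hf k n)
    (by positivity : (0 : R) ≤ n + k + 1)
  have heuler := succ_mul_coeff_eulerDeriv_mul_pow f (n + k) (n + k)
  have hk := mul_nonneg (k.cast_nonneg (α := R)) (coeff_nonneg (pow_nonneg hf (n + k + 1)) (n + k))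
  push_cast at heuler
  linarith

lemma X_pow_mul_eulerDeriv_shift_le (hf : 0 ≤ f) (k : ℕ) :
    X ^ k * eulerDeriv (shift k f) ≤ eulerDeriv f := fun n ↦ by
  have hn := coeff_nonneg hf n
  rw [coeff_X_pow_mul', coeff_eulerDeriv, coeff_eulerDeriv, shift, coeff_mk]
  split_ifs with hkn
  · rw [Nat.add_sub_cancel' hkn]
    gcongr
    omega
  · positivity

lemma mul_coeff_eulerDeriv_shift_mul_pow_le (hf : 0 ≤ f) (k n : ℕ) :
    (n + k + 1) * (constantCoeff f ^ k * coeff n (eulerDeriv (shift k f) * f ^ n)) ≤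
      (n + k) * coeff (n + k) (f ^ (n + k + 1)) := by
  have hc := C_nonneg (constantCoeff_nonneg hf)
  have hle : C (constantCoeff f ^ k) * (X ^ k * (eulerDeriv (shift k f) * f ^ n)) ≤
      eulerDeriv f * f ^ (n + k) := by
    calc C (constantCoeff f ^ k) * (X ^ k * (eulerDeriv (shift k f) * f ^ n))
        = X ^ k * eulerDeriv (shift k f) * (f ^ n * C (constantCoeff f) ^ k) := by
          rw [map_pow]; ring
      _ ≤ eulerDeriv f * (f ^ n * f ^ k) :=
          mul_le_mul (X_pow_mul_eulerDeriv_shift_le hf k)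
            (mul_le_mul_of_nonneg_left (pow_le_pow_left₀ hc (C_constantCoeff_le hf) k)
              (pow_nonneg hf n))
            (mul_nonneg (pow_nonneg hf n) (pow_nonneg hc k)) (eulerDeriv_nonneg hf)
      _ = eulerDeriv f * f ^ (n + k) := by rw [pow_add]
  have heuler := succ_mul_coeff_eulerDeriv_mul_pow f (n + k) (n + k)
  have hcoeff := coeff_le_coeff hle (n + k)
  rw [coeff_C_mul, coeff_X_pow_mul] at hcoeff
  push_cast at heuler
  rw [← heuler]
  gcongr

end Shift

lemma tendsto_natCast_add_div_natCast (a : ℝ) :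
    Tendsto (fun n : ℕ ↦ (n + a) / n) atTop (𝓝 1) := by
  have h := (tendsto_const_div_atTop_nhds_zero_nat a).const_add 1
  rw [add_zero] at h
  refine h.congr' ?_
  filter_upwards [eventually_ne_atTop 0] with n hn
  rw [add_div, div_self (Nat.cast_ne_zero.2 hn)]

lemma tendsto_coeff_eulerDeriv_shift_mul_pow_div {f : ℝ⟦X⟧} (hf : 0 ≤ f)
    (h0 : 0 < constantCoeff f)
    (hratio : Tendsto (fun n ↦ coeff (n + 1) f / coeff n f) atTop atTop) (k : ℕ) :
    Tendsto (fun n : ℕ ↦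
      (constantCoeff f ^ k * coeff n (eulerDeriv (shift k f) * f ^ n) / n) /
        (coeff (n + k) (f ^ (n + k + 1)) / (n + k + 1))) atTop (𝓝 1) := by
  have hocc := (coeff_dropConst_mul_pow_isLittleO hf h0 hratio).tendsto_div_nhds_zero.comp
    (tendsto_add_atTop_nat k)
  have hlower := (((tendsto_natCast_add_div_natCast (k + 1)).mul hocc).const_mul
    (2 * k : ℝ)).const_sub 1
  rw [mul_zero, mul_zero, sub_zero] at hlower
  have hpos := (tendsto_add_atTop_nat k).eventually (eventually_coeff_pow_succ_pos hf h0 hratio)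
  refine tendsto_of_tendsto_of_tendsto_of_le_of_le' hlower (tendsto_natCast_add_div_natCast k) ?_ ?_
  · filter_upwards [hpos, eventually_gt_atTop 0] with n hS hn
    have : (0 : ℝ) < n := Nat.cast_pos.2 hn
    have h := mul_coeff_pow_succ_sub_le hf k n
    rw [div_div_div_eq, le_div_iff₀ (by positivity)]
    simp only [Function.comp_apply]
    field_simp
    linarith
  · filter_upwards [hpos, eventually_gt_atTop 0] with n hS hn
    have hn : (0 : ℝ) < n := Nat.cast_pos.2 hn
    have h := mul_coeff_eulerDeriv_shift_mul_pow_le hf k n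
    rw [div_div_div_eq, div_le_div_iff₀ (by positivity) hn]
    nlinarith

lemma tsum_biUnion_image {α ι β γ : Type*} [AddCommMonoid α] [TopologicalSpace α] [ContinuousAdd α]
    [T2Space α] {s : Finset ι} {t : ι → Set γ} {g : ι → γ → β}
    (hdisj : (s : Set ι).PairwiseDisjoint fun i ↦ g i '' t i)
    (hfin : ∀ i ∈ s, (t i).Finite) (hinj : ∀ i ∈ s, (t i).InjOn (g i)) (F : β → α) :
    ∑' b : ⋃ i ∈ s, g i '' t i, F b = ∑ i ∈ s, ∑' c : t i, F (g i c) := by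
  rw [Summable.tsum_finset_bUnion_disjoint hdisj fun i hi ↦
    have := ((hfin i hi).image (g i)).to_subtype
    Summable.of_finite]
  exact Finset.sum_congr rfl fun i hi ↦ tsum_image F (hinj i hi)

end SimplyGenerated

namespace PTree

open SimplyGenerated PowerSeries
open scoped Topology

/-- The weight generating function `∑ d, w_{d+1} X ^ d` of the outdegree of a vertex. -/
noncomputable def outdegreeSeries (w : ℕ → ℝ) : ℝ⟦X⟧ :=
  PowerSeries.mk fun d ↦ w (d + 1)

lemma coeff_outdegreeSeries (w : ℕ → ℝ) (d : ℕ) : coeff d (outdegreeSeries w) = w (d + 1) :=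
  coeff_mk d _

lemma constantCoeff_outdegreeSeries (w : ℕ → ℝ) : constantCoeff (outdegreeSeries w) = w 1 := by
  rw [← coeff_zero_eq_constantCoeff_apply, coeff_outdegreeSeries]

lemma outdegreeSeries_nonneg {w : ℕ → ℝ} (hw : ∀ n, 1 ≤ n → 0 ≤ w n) : 0 ≤ outdegreeSeries w :=
  nonneg_iff_coeff_nonneg.2 fun d ↦ by
    rw [coeff_outdegreeSeries]
    exact hw _ d.succ_pos

lemma size_node (ts : List PTree) : (node ts).size = 1 + (ts.map size).sum := by
  rw [size, ts.attach_map_val]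

lemma weight_node (w : ℕ → ℝ) (ts : List PTree) :
    (node ts).weight w = w (ts.length + 1) * (ts.map (weight w)).prod := by
  rw [weight, ts.attach_map_val]

lemma size_pos : ∀ t : PTree, 0 < t.size
  | node ts => by rw [size_node]; exact Nat.add_pos_left one_pos _

lemma length_le_sum_size (L : List PTree) : L.length ≤ (L.map size).sum := by
  simpa using L.map size |>.card_nsmul_le_sum 1 fun n hn ↦ by
    obtain ⟨t, -, rfl⟩ := List.mem_map.1 hn
    exact t.size_pos

/-- The ordered forests of `j` trees with `n` vertices in total. -/
def forests (j n : ℕ) : Set (List PTree) :=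
  {L | L.length = j ∧ (L.map size).sum = n}

lemma forests_zero_zero : forests 0 0 = {[]} := by
  ext L
  cases L <;> simp [forests]

lemma forests_zero_succ (n : ℕ) : forests 0 (n + 1) = ∅ := by
  ext L
  cases L <;> simp [forests]

lemma forests_succ_zero (j : ℕ) : forests (j + 1) 0 = ∅ := by
  refine Set.eq_empty_of_forall_notMem fun L hL ↦ ?_
  have := length_le_sum_size L
  rw [hL.1, hL.2] at this
  omega

/-- Turns the first `d` trees of a forest into the branches of a single tree, which becomes the
first tree of the new forest. -/
def graft (d : ℕ) (L : List PTree) : List PTree :=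
  node (L.take d) :: L.drop d

lemma graft_length_append (ts L : List PTree) : graft ts.length (ts ++ L) = node ts :: L := by
  rw [graft, List.take_left, List.drop_left]

lemma graft_injective (d : ℕ) : Function.Injective (graft d) := fun L L' h ↦ by
  simp only [graft, List.cons.injEq, node.injEq] at h
  rw [← L.take_append_drop d, h.1, h.2, L'.take_append_drop d]

lemma forests_succ_succ (j n : ℕ) :
    forests (j + 1) (n + 1) = ⋃ d ∈ Finset.range (n + 1), graft d '' forests (j + d) n := by
  ext L
  simp only [Set.mem_iUnion, Finset.mem_range_succ_iff, Set.mem_image, exists_prop]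
  constructor
  · rintro ⟨hlen, hsize⟩
    obtain - | ⟨⟨ts⟩, L⟩ := L
    · simp at hlen
    · rw [List.map_cons, List.sum_cons, size_node] at hsize
      rw [List.length_cons] at hlen
      have := length_le_sum_size ts
      refine ⟨ts.length, by omega, ts ++ L, ⟨?_, ?_⟩, graft_length_append ts L⟩
      · rw [List.length_append]; omega
      · rw [List.map_append, List.sum_append]; omega
  · rintro ⟨d, -, L, ⟨hlen, hsize⟩, rfl⟩
    have hsplit := congrArg (fun L ↦ (L.map size).sum) (L.take_append_drop d)
    simp only [List.map_append, List.sum_append] at hsplit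
    refine ⟨?_, ?_⟩
    · rw [graft, List.length_cons, List.length_drop]; omega
    · rw [graft, List.map_cons, List.sum_cons, size_node]; omega

lemma finite_forests (j n : ℕ) : (forests j n).Finite := by
  induction n generalizing j with
  | zero =>
    cases j with
    | zero => rw [forests_zero_zero]; exact Set.finite_singleton _
    | succ j => rw [forests_succ_zero]; exact Set.finite_empty
  | succ n ih =>
    cases j with
    | zero => rw [forests_zero_succ]; exact Set.finite_empty
    | succ j =>
      rw [forests_succ_succ]
      exact (Finset.finite_toSet _).biUnion fun d _ ↦ (ih (j + d)).image _

/-- The partition function of the ordered forests of `j` trees with `n` vertices in total. -/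
noncomputable def forestWeight (w : ℕ → ℝ) (j n : ℕ) : ℝ :=
  ∑' L : forests j n, (L.1.map (weight w)).prod

lemma forestWeight_zero_zero (w : ℕ → ℝ) : forestWeight w 0 0 = 1 := by
  rw [forestWeight, forests_zero_zero, tsum_singleton [] fun L : List PTree ↦ (L.map _).prod,
    List.map_nil, List.prod_nil]

lemma forestWeight_zero_succ (w : ℕ → ℝ) (n : ℕ) : forestWeight w 0 (n + 1) = 0 := by
  rw [forestWeight, forests_zero_succ, tsum_empty]

lemma forestWeight_succ_zero (w : ℕ → ℝ) (j : ℕ) : forestWeight w (j + 1) 0 = 0 := by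
  rw [forestWeight, forests_succ_zero, tsum_empty]

lemma forestWeight_succ_succ (w : ℕ → ℝ) (j n : ℕ) :
    forestWeight w (j + 1) (n + 1) =
      ∑ d ∈ Finset.range (n + 1), w (d + 1) * forestWeight w (j + d) n := by
  have hdisj : (Finset.range (n + 1) : Set ℕ).PairwiseDisjoint
      fun d ↦ graft d '' forests (j + d) n := by
    intro d _ e _ hde
    refine Set.disjoint_left.2 ?_
    rintro _ ⟨L, hL, rfl⟩ ⟨L', hL', h⟩
    simp only [graft, List.cons.injEq, node.injEq] at h
    have := congrArg List.length h.1
    rw [List.length_take, List.length_take, hL.1, hL'.1] at this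
    omega
  rw [forestWeight, forests_succ_succ,
    tsum_biUnion_image hdisj (fun d _ ↦ finite_forests _ n) (fun d _ ↦ (graft_injective d).injOn)
      fun L : List PTree ↦ (L.map (weight w)).prod]
  refine Finset.sum_congr rfl fun d _ ↦ ?_
  rw [forestWeight, ← tsum_mul_left]
  refine tsum_congr fun L ↦ ?_
  rw [graft, List.map_cons, List.prod_cons, weight_node, mul_assoc, ← List.prod_append,
    ← List.map_append, List.take_append_drop, List.length_take_of_le (by rw [L.2.1]; omega)]

-- The Otter–Dwass formula. Both sides satisfy the recursion obtained by removing the first vertex.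
lemma natCast_mul_forestWeight (w : ℕ → ℝ) (j n : ℕ) :
    n * forestWeight w j n = j * coeff n (X ^ j * outdegreeSeries w ^ n) := by
  induction n generalizing j with
  | zero => cases j <;> simp
  | succ n ih =>
    obtain - | j := j
    · simp [forestWeight_zero_succ]
    rw [pow_succ' X, mul_assoc, coeff_succ_X_mul]
    rcases Nat.eq_zero_or_pos n with rfl | hn
    · cases j <;> simp [forestWeight_succ_succ, forestWeight_zero_zero, forestWeight_succ_zero,
        constantCoeff_outdegreeSeries]
    have hrec : n * forestWeight w (j + 1) (n + 1) =
        coeff n ((C (j : ℝ) * outdegreeSeries w + eulerDeriv (outdegreeSeries w)) *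
          (X ^ j * outdegreeSeries w ^ n)) := by
      rw [forestWeight_succ_succ, coeff_mul_eq_sum_range, Finset.mul_sum]
      refine Finset.sum_congr rfl fun d _ ↦ ?_
      rw [mul_left_comm, ih, map_add, coeff_C_mul, coeff_eulerDeriv, coeff_outdegreeSeries,
        ← mul_assoc (X ^ d), ← pow_add, add_comm d j]
      push_cast
      ring
    have heuler := succ_mul_coeff_mul_X_pow_mul_pow (outdegreeSeries w) j n
    rw [← hrec] at heuler
    apply mul_left_cancel₀ (Nat.cast_ne_zero (R := ℝ).2 hn.ne')
    push_cast
    linear_combination heuler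

lemma natCast_mul_sum_forestWeight (w : ℕ → ℝ) (f : ℝ⟦X⟧) (n : ℕ) :
    n * ∑ d ∈ Finset.range (n + 1), coeff d f * forestWeight w d n =
      coeff n (eulerDeriv f * outdegreeSeries w ^ n) := by
  simp only [Finset.mul_sum, mul_left_comm (n : ℝ), natCast_mul_forestWeight]
  rw [coeff_mul_eq_sum_range]
  refine Finset.sum_congr rfl fun d _ ↦ ?_
  rw [coeff_eulerDeriv]
  ring

/-- The root has at least `k` branches and the first `k` of them are single vertices: the
neighbourhood of the root agrees with the infinite star in its first `k` branches. -/
def StartsWithLeaves (k : ℕ) (t : PTree) : Prop :=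
  k ≤ t.children.length ∧ ∀ c ∈ t.children.take k, c.children.length = 0

/-- The tree whose branches are `k` single vertices followed by the trees of the forest `L`. -/
def starAppend (k : ℕ) (L : List PTree) : PTree :=
  node (List.replicate k (node []) ++ L)

lemma starAppend_injective (k : ℕ) : Function.Injective (starAppend k) := fun _ _ h ↦
  List.append_cancel_left (node.inj h)

lemma size_starAppend (k : ℕ) (L : List PTree) :
    (starAppend k L).size = (L.map size).sum + k + 1 := by
  rw [starAppend, size_node, List.map_append, List.sum_append, List.map_replicate,
    List.sum_replicate, size_node, List.map_nil, List.sum_nil, smul_eq_mul]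
  omega

lemma weight_starAppend (w : ℕ → ℝ) (k : ℕ) (L : List PTree) :
    (starAppend k L).weight w =
      w 1 ^ k * (w (k + L.length + 1) * (L.map (weight w)).prod) := by
  rw [starAppend, weight_node, List.length_append, List.length_replicate, List.map_append,
    List.prod_append, List.map_replicate, List.prod_replicate, weight_node, List.map_nil,
    List.prod_nil, mul_one, List.length_nil]
  ring

lemma startsWithLeaves_iff_mem_range (k : ℕ) (t : PTree) :
    StartsWithLeaves k t ↔ t ∈ Set.range (starAppend k) := by
  obtain ⟨ts⟩ := t
  constructor
  · rintro ⟨hlen, hleaf⟩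
    refine ⟨ts.drop k, ?_⟩
    have htake : ts.take k = List.replicate k (node []) :=
      List.eq_replicate_iff.2 ⟨List.length_take_of_le hlen, fun c hc ↦ by
        obtain ⟨cs⟩ := c
        exact congrArg node (List.length_eq_zero_iff.1 (hleaf _ hc))⟩
    rw [starAppend, ← htake, List.take_append_drop]
  · rintro ⟨L, hL⟩
    rw [← hL, starAppend]
    refine ⟨by simp [children], fun c hc ↦ ?_⟩
    rw [children, List.take_left' List.length_replicate] at hc
    rw [List.eq_of_mem_replicate hc, children, List.length_nil]

lemma size_eq_and_startsWithLeaves_iff (k n : ℕ) (t : PTree) :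
    t.size = n + k + 1 ∧ StartsWithLeaves k t ↔
      t ∈ ⋃ d ∈ Finset.range (n + 1), starAppend k '' forests d n := by
  simp only [startsWithLeaves_iff_mem_range, Set.mem_iUnion, Set.mem_image,
    Finset.mem_range_succ_iff, exists_prop]
  constructor
  · rintro ⟨hsize, L, rfl⟩
    rw [size_starAppend, Nat.add_right_cancel_iff, Nat.add_right_cancel_iff] at hsize
    exact ⟨L.length, hsize ▸ length_le_sum_size L, L, ⟨rfl, hsize⟩, rfl⟩
  · rintro ⟨d, -, L, ⟨-, hsize⟩, rfl⟩
    exact ⟨by rw [size_starAppend, hsize], L, rfl⟩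

lemma tsum_weight_startsWithLeaves (w : ℕ → ℝ) (k n : ℕ) :
    ∑' t : {t : PTree // t.size = n + k + 1 ∧ StartsWithLeaves k t}, t.1.weight w =
      w 1 ^ k * ∑ d ∈ Finset.range (n + 1),
        coeff d (shift k (outdegreeSeries w)) * forestWeight w d n := by
  have hdisj : (Finset.range (n + 1) : Set ℕ).PairwiseDisjoint
      fun d ↦ starAppend k '' forests d n := by
    intro d _ e _ hde
    refine Set.disjoint_image_of_injective (starAppend_injective k) (Set.disjoint_left.2 ?_)
    exact fun L hL hL' ↦ hde (hL.1.symm.trans hL'.1)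
  rw [tsum_congr_subtype (weight w) (size_eq_and_startsWithLeaves_iff k n),
    tsum_biUnion_image hdisj (fun d _ ↦ finite_forests d n)
      (fun d _ ↦ (starAppend_injective k).injOn) (weight w), Finset.mul_sum]
  refine Finset.sum_congr rfl fun d _ ↦ ?_
  rw [forestWeight, ← tsum_mul_left, ← tsum_mul_left]
  refine tsum_congr fun L ↦ ?_
  rw [weight_starAppend, L.2.1, shift, coeff_mk, coeff_outdegreeSeries]

lemma natCast_mul_tsum_weight_startsWithLeaves (w : ℕ → ℝ) (k n : ℕ) :
    n * ∑' t : {t : PTree // t.size = n + k + 1 ∧ StartsWithLeaves k t}, t.1.weight w =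
      w 1 ^ k * coeff n (eulerDeriv (shift k (outdegreeSeries w)) * outdegreeSeries w ^ n) := by
  rw [tsum_weight_startsWithLeaves, mul_left_comm, natCast_mul_sum_forestWeight]

lemma succ_mul_Zfun_succ (w : ℕ → ℝ) {n : ℕ} (hn : n ≠ 0) :
    (n + 1) * Zfun w (n + 1) = coeff n (outdegreeSeries w ^ (n + 1)) := by
  have hZ : Zfun w (n + 1) =
      ∑' t : {t : PTree // t.size = n + 0 + 1 ∧ StartsWithLeaves 0 t}, t.1.weight w :=
    tsum_congr_subtype (weight w) fun t ↦ by simp [StartsWithLeaves]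
  have hn : (n : ℝ) ≠ 0 := Nat.cast_ne_zero.2 hn
  have hshift : shift 0 (outdegreeSeries w) = outdegreeSeries w := by
    ext d
    rw [shift, coeff_mk, zero_add]
  apply mul_left_cancel₀ hn
  rw [hZ, mul_left_comm, natCast_mul_tsum_weight_startsWithLeaves w 0 n, pow_zero, one_mul, hshift,
    succ_mul_coeff_eulerDeriv_mul_pow]

lemma nu_startsWithLeaves (w : ℕ → ℝ) (k : ℕ) {n : ℕ} (hn : n ≠ 0) :
    nu w (n + k + 1) (StartsWithLeaves k) =
      (w 1 ^ k * coeff n (eulerDeriv (shift k (outdegreeSeries w)) * outdegreeSeries w ^ n) / n) /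
        (coeff (n + k) (outdegreeSeries w ^ (n + k + 1)) / (n + k + 1)) := by
  have hZ := succ_mul_Zfun_succ w (n := n + k) (by omega)
  rw [nu, ← natCast_mul_tsum_weight_startsWithLeaves, ← hZ, Nat.cast_add,
    mul_div_cancel_left₀ _ (Nat.cast_ne_zero.2 hn), mul_div_cancel_left₀ _ (by positivity)]

end PTree

/-- Theorem 1: for superexponential weights `w_{n+1}/w_n → ∞`, the measures `ν_N` converge
weakly, in the local (left-ball) topology on the space of rooted planar trees, to the point
mass on the infinite star (σ(s) = ∞ and all other vertices of degree 1).  In this topology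
(where convergence means convergence of the degree of every vertex of the Ulam–Harris tree),
weak convergence to this point mass is equivalent to: for every `k`, with probability
tending to 1, `s` has at least `k` children and its first `k` children are leaves. -/
theorem stmt_18 (w : ℕ → ℝ) (hw : ∀ n, 1 ≤ n → 0 ≤ w n) (h1 : 0 < w 1)
    (h2 : ∃ n, 2 < n ∧ 0 < w n)
    (hratio : Tendsto (fun n => w (n + 1) / w n) atTop atTop) :
    ∀ k : ℕ,
      Tendsto (fun N : ℕ => nu w N
          (fun t => k ≤ t.children.length ∧
            ∀ c ∈ t.children.take k, c.children.length = 0))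
        atTop (nhds 1) := by
  intro k
  have hcoeff : Tendsto (fun n ↦ (PTree.outdegreeSeries w).coeff (n + 1) /
      (PTree.outdegreeSeries w).coeff n) atTop atTop := by
    simp only [PTree.coeff_outdegreeSeries]
    exact hratio.comp (tendsto_add_atTop_nat 1)
  have hconst := PTree.constantCoeff_outdegreeSeries w
  rw [← tendsto_add_atTop_iff_nat (k + 1)]
  refine (SimplyGenerated.tendsto_coeff_eulerDeriv_shift_mul_pow_div
    (PTree.outdegreeSeries_nonneg hw) (hconst ▸ h1) hcoeff k).congr' ?_
  filter_upwards [eventually_ne_atTop 0] with n hn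
  rw [hconst]
  exact (PTree.nu_startsWithLeaves w k hn).symm
end

section
/- With weights w_n = ((n−1)!)^α for α > 1, the partition function satisfies Z_N / ((N−1)!)^α → 1 as N → ∞. -/
open Filter

/-- `Z w N n = Σ_{d_1+⋯+d_N = n} ∏_{i=1}^N w_{d_i+1}` (and `Z w 0 n = [n = 0]`). -/
noncomputable def Z (w : ℕ → ℝ) (N n : ℕ) : ℝ :=
  ∑ d ∈ Finset.Nat.antidiagonalTuple N n, ∏ i, w (d i + 1)

/-!
A star has one `d i` equal to `N - 1` and all the others `0`; there are `N` of them, each of weight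
`((N - 1)!) ^ α`. Every other tuple has `∏ (d i)! ≤ (N - 2)!`, so its weight is at most
`((N - 2)!) ^ (α - 1) * ∏ (d i)!`. It remains to see that the partition function for `α = 1` is
`O(N!)`. It is the coefficient of `X ^ (N - 1)` in `(1 + X * H) ^ N`, where `H = ∑ (k + 1)! X ^ k`.
The coefficients of `H ^ s` are at most `4 ^ s` times those of `H`, so the binomial theorem gives
`∑ s, N.choose s * 4 ^ s * (N - s)! ≤ exp 4 * N!`. Relative to the stars, the other tuples
therefore contribute at most `exp 4 * (N - 1) ^ (1 - α)`.
-/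

section

open Finset PowerSeries
open scoped Nat

lemma factorial_add_mul_factorial_add_le (a b c : ℕ) :
    (a + c)! * (b + c)! ≤ c ! * (a + b + c)! := by
  calc (a + c)! * (b + c)! = c ! * ((a + c)! * (c + 1).ascFactorial b) := by
        rw [add_comm b c, ← Nat.factorial_mul_ascFactorial c b, mul_left_comm]
    _ ≤ c ! * ((a + c)! * (a + c + 1).ascFactorial b) := by
        gcongr
        exact Nat.le_add_left c a
    _ = c ! * (a + b + c)! := by rw [Nat.factorial_mul_ascFactorial, add_right_comm]

lemma sum_antidiagonal_factorial_succ_mul_le (n : ℕ) :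
    ∑ p ∈ antidiagonal n, (p.1 + 1)! * (p.2 + 1)! ≤ 4 * (n + 1)! := by
  match n with
  | 0 => simp
  | 1 => decide
  | m + 2 =>
    have interior_le :
        ∑ p ∈ antidiagonal m, (p.1 + 2)! * (p.2 + 2)! ≤ (m + 1) * (2 * (m + 2)!) := by
      rw [← Nat.card_antidiagonal, ← smul_eq_mul]
      refine sum_le_card_nsmul _ _ _ fun p hp ↦ ?_
      rw [← mem_antidiagonal.mp hp]
      exact factorial_add_mul_factorial_add_le p.1 p.2 2
    rw [Nat.sum_antidiagonal_succ, Nat.sum_antidiagonal_succ']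
    calc _ = 2 * (m + 3)! + ∑ p ∈ antidiagonal m, (p.1 + 2)! * (p.2 + 2)! := by simp; ring
      _ ≤ 2 * (m + 3)! + (m + 1) * (2 * (m + 2)!) := by gcongr
      _ ≤ 4 * (m + 3)! := by rw [Nat.factorial_succ (m + 2)]; nlinarith [(m + 2)!.zero_le]

lemma coeff_mk_factorial_succ_pow_le (s n : ℕ) :
    coeff n ((PowerSeries.mk fun k ↦ ((k + 1)! : ℝ)) ^ s) ≤ 4 ^ s * (n + 1)! := by
  induction s generalizing n with
  | zero =>
    rw [pow_zero, coeff_one]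
    split_ifs <;> simp [Nat.one_le_iff_ne_zero, Nat.factorial_ne_zero]
  | succ s ih =>
    rw [pow_succ, coeff_mul]
    calc _ ≤ ∑ p ∈ antidiagonal n, 4 ^ s * (p.1 + 1)! * ((p.2 + 1)! : ℝ) := by
          gcongr with p
          · simp
          · exact ih p.1
          · simp
      _ = 4 ^ s * (∑ p ∈ antidiagonal n, (p.1 + 1)! * (p.2 + 1)! : ℕ) := by
          push_cast
          simp only [mul_sum, mul_assoc]
      _ ≤ 4 ^ s * (4 * (n + 1)! : ℕ) := by
          gcongr
          exact sum_antidiagonal_factorial_succ_mul_le n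
      _ = 4 ^ (s + 1) * (n + 1)! := by push_cast; ring

lemma factorial_mul_choose_mul_factorial_le {m n s : ℕ} (hmn : m ≤ n + 1) (hs : s ≤ n) :
    s ! * (m.choose s * (n - s + 1)!) ≤ (n + 1)! := by
  rw [← Nat.choose_mul_factorial_mul_factorial (hs.trans n.le_succ), Nat.succ_sub hs,
    ← mul_assoc, mul_comm s !]
  gcongr

lemma coeff_mk_factorial_pow_le {m n : ℕ} (hmn : m ≤ n + 1) :
    coeff n ((PowerSeries.mk fun k ↦ (k ! : ℝ)) ^ m) ≤ Real.exp 4 * (n + 1)! := by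
  set H : ℝ⟦X⟧ := PowerSeries.mk fun k ↦ ((k + 1)! : ℝ)
  have eq_X_mul_add_one : (PowerSeries.mk fun k ↦ (k ! : ℝ)) = X * H + 1 := by
    simpa using eq_X_mul_shift_add_const (PowerSeries.mk fun k ↦ (k ! : ℝ))
  have term_le (s : ℕ) :
      coeff (R := ℝ) n ((X * H) ^ s) * m.choose s ≤ 4 ^ s / s ! * (n + 1)! := by
    rw [mul_pow, coeff_X_pow_mul']
    split_ifs with hs
    · calc _ ≤ 4 ^ s * (n - s + 1)! * (m.choose s : ℝ) := by
            gcongr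
            exact coeff_mk_factorial_succ_pow_le s (n - s)
        _ = 4 ^ s / s ! * (s ! * (m.choose s * (n - s + 1)!) : ℕ) := by
            push_cast
            field_simp
        _ ≤ 4 ^ s / s ! * (n + 1)! := by
            gcongr
            exact factorial_mul_choose_mul_factorial_le hmn hs
    · rw [zero_mul]
      positivity
  calc _ = ∑ s ∈ range (m + 1), coeff (R := ℝ) n ((X * H) ^ s) * m.choose s := by
        simp [eq_X_mul_add_one, add_pow, ← nsmul_eq_mul', -nsmul_eq_mul]
    _ ≤ ∑ s ∈ range (m + 1), 4 ^ s / s ! * ((n + 1)! : ℝ) := sum_le_sum fun s _ ↦ term_le s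
    _ ≤ Real.exp 4 * (n + 1)! := by
        rw [← sum_mul]
        gcongr
        exact Real.sum_le_exp_of_nonneg (by norm_num) _

lemma Z_eq_coeff_pow (w : ℕ → ℝ) (N n : ℕ) :
    Z w N n = coeff n ((PowerSeries.mk fun k ↦ w (k + 1)) ^ N) := by
  have h := coeff_prod (fun _ : Fin N ↦ PowerSeries.mk fun k ↦ w (k + 1)) n univ
  rw [prod_const, card_univ, Fintype.card_fin] at h
  rw [h, Z]
  refine sum_equiv Finsupp.equivFunOnFinite.symm ?_ ?_ <;>
    simp [Nat.mem_antidiagonalTuple]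

/-- The contribution to `Z w N n` of the tuples other than the stars, a star being a tuple of sum
`n` with an entry equal to `n`. -/
noncomputable def nonStarSum (w : ℕ → ℝ) (N n : ℕ) : ℝ :=
  ∑ d ∈ Nat.antidiagonalTuple N n with ¬∃ i, d i = n, ∏ i, w (d i + 1)

lemma filter_exists_eq_antidiagonalTuple (N n : ℕ) :
    {d ∈ Nat.antidiagonalTuple N n | ∃ i, d i = n} =
      univ.image fun i ↦ (Pi.single i n : Fin N → ℕ) := by
  ext d
  simp only [mem_filter, Nat.mem_antidiagonalTuple, mem_image, mem_univ, true_and]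
  constructor
  · rintro ⟨hsum, i, hi⟩
    have sum_erase : ∑ j ∈ univ.erase i, d j = 0 := by
      have := add_sum_erase univ d (mem_univ i)
      lia
    refine ⟨i, funext fun j ↦ ?_⟩
    obtain rfl | hj := eq_or_ne j i
    · simp [hi]
    · simp [hj, sum_eq_zero_iff.mp sum_erase j (by simp [hj])]
  · rintro ⟨i, rfl⟩
    exact ⟨by simp, i, by simp⟩

lemma Z_eq_add_nonStarSum {w : ℕ → ℝ} (hw : w 1 = 1) (N : ℕ) {n : ℕ} (hn : n ≠ 0) :
    Z w N n = N * w (n + 1) + nonStarSum w N n := by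
  have single_injective : Function.Injective fun i ↦ (Pi.single i n : Fin N → ℕ) := by
    intro i j hij
    by_contra hne
    simpa [hne, hn] using congrFun hij i
  have prod_single (i : Fin N) : ∏ j, w ((Pi.single i n : Fin N → ℕ) j + 1) = w (n + 1) := by
    rw [Fintype.prod_eq_single i fun j hj ↦ by simp [hj, hw], Pi.single_eq_same]
  rw [Z, ← sum_filter_add_sum_filter_not _ fun d ↦ ∃ i, d i = n,
    filter_exists_eq_antidiagonalTuple, sum_image single_injective.injOn]
  simp [prod_single, nonStarSum]

lemma Z_div_eq_one_add {w : ℕ → ℝ} (hw : w 1 = 1) {N n : ℕ} (hN : N ≠ 0) (hn : n ≠ 0)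
    (hwn : w (n + 1) ≠ 0) :
    Z w N n / N / w (n + 1) = 1 + nonStarSum w N n / (N * w (n + 1)) := by
  rw [Z_eq_add_nonStarSum hw N hn, div_div, add_div,
    div_self (mul_ne_zero (Nat.cast_ne_zero.mpr hN) hwn)]

lemma prod_factorial_le_factorial_of_sum_eq_succ {ι : Type*} {s : Finset ι} {d : ι → ℕ} {n : ℕ}
    (hsum : ∑ i ∈ s, d i = n + 1) (hd : ∀ i ∈ s, d i ≤ n) : ∏ i ∈ s, (d i)! ≤ n ! := by
  classical
  obtain ⟨i, his, hi⟩ : ∃ i ∈ s, d i ≠ 0 := exists_ne_zero_of_sum_ne_zero (by lia)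
  rw [← add_sum_erase _ _ his] at hsum
  obtain ⟨a, ha⟩ := Nat.exists_eq_succ_of_ne_zero hi
  obtain ⟨b, hb⟩ : ∃ b, ∑ j ∈ s.erase i, d j = b + 1 :=
    Nat.exists_eq_succ_of_ne_zero (by grind)
  calc ∏ j ∈ s, (d j)! = (d i)! * ∏ j ∈ s.erase i, (d j)! := (mul_prod_erase _ _ his).symm
    _ ≤ (d i)! * (∑ j ∈ s.erase i, d j)! := by
        gcongr
        exact Nat.le_of_dvd (Nat.factorial_pos _) (Nat.prod_factorial_dvd_factorial_sum _ d)
    _ = (a + 1)! * (b + 1)! := by rw [ha, hb]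
    _ ≤ 1 ! * (a + b + 1)! := factorial_add_mul_factorial_add_le a b 1
    _ = n ! := by
        rw [Nat.factorial_one, one_mul]
        congr 1
        lia

/-- The weights `w_n = ((n - 1)!) ^ α`, so that `factorialWeight α (d + 1) = (d !) ^ α`; for `n = 0`
truncated subtraction gives `1`, a value that `Z` never uses. -/
noncomputable def factorialWeight (α : ℝ) (n : ℕ) : ℝ := ((n - 1)! : ℝ) ^ α

@[simp]
lemma factorialWeight_add_one (α : ℝ) (n : ℕ) : factorialWeight α (n + 1) = (n ! : ℝ) ^ α := rfl

lemma Z_factorialWeight_one_le {N n : ℕ} (hN : N ≤ n + 1) :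
    Z (factorialWeight 1) N n ≤ Real.exp 4 * (n + 1)! := by
  simpa [Z_eq_coeff_pow] using coeff_mk_factorial_pow_le hN

lemma nonStarSum_factorialWeight_nonneg (α : ℝ) (N n : ℕ) :
    0 ≤ nonStarSum (factorialWeight α) N n :=
  sum_nonneg fun _ _ ↦ prod_nonneg fun _ _ ↦ Real.rpow_nonneg (Nat.cast_nonneg _) α

lemma nonStarSum_factorialWeight_le {α β : ℝ} (hβα : β ≤ α) (N n : ℕ) :
    nonStarSum (factorialWeight α) N (n + 1) ≤
      (n ! : ℝ) ^ (α - β) * Z (factorialWeight β) N (n + 1) := by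
  have prod_weight (γ : ℝ) (d : Fin N → ℕ) :
      ∏ i, factorialWeight γ (d i + 1) = ((∏ i, (d i)! : ℕ) : ℝ) ^ γ := by
    simp [Real.finsetProd_rpow]
  simp only [nonStarSum, Z, prod_weight, mul_sum]
  refine (sum_le_sum fun d hd ↦ ?_).trans <|
    sum_le_sum_of_subset_of_nonneg (filter_subset _ _) fun d _ _ ↦ by positivity
  rw [mem_filter, Nat.mem_antidiagonalTuple] at hd
  obtain ⟨hsum, hne⟩ := hd
  have entry_le (i : Fin N) : d i ≤ n := by
    have := single_le_sum (fun j _ ↦ (d j).zero_le) (mem_univ i)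
    grind
  have prod_pos : (0 : ℝ) < (∏ i, (d i)! : ℕ) :=
    Nat.cast_pos.mpr <| Finset.prod_pos fun i _ ↦ (d i).factorial_pos
  calc ((∏ i, (d i)! : ℕ) : ℝ) ^ α
      = ((∏ i, (d i)! : ℕ) : ℝ) ^ (α - β) * ((∏ i, (d i)! : ℕ) : ℝ) ^ β := by
        rw [← Real.rpow_add prod_pos, sub_add_cancel]
    _ ≤ (n ! : ℝ) ^ (α - β) * ((∏ i, (d i)! : ℕ) : ℝ) ^ β := by
        gcongr
        exact prod_factorial_le_factorial_of_sum_eq_succ hsum fun i _ ↦ entry_le i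

lemma rpow_one_sub_mul_factorial_succ_rpow (α : ℝ) (n : ℕ) :
    ((n + 1 : ℕ) : ℝ) ^ (1 - α) * ((n + 1)! : ℝ) ^ α = (n ! : ℝ) ^ (α - 1) * (n + 1)! := by
  have factorial_pos : (0 : ℝ) < n ! := by positivity
  have succ_pos : (0 : ℝ) < (n + 1 : ℕ) := by positivity
  rw [Nat.factorial_succ, Nat.cast_mul, Real.mul_rpow succ_pos.le factorial_pos.le, ← mul_assoc,
    ← Real.rpow_add succ_pos, sub_add_cancel, Real.rpow_one, Real.rpow_sub_one factorial_pos.ne']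
  field_simp

lemma nonStarSum_factorialWeight_div_le {α : ℝ} (hα : 1 ≤ α) (n : ℕ) :
    nonStarSum (factorialWeight α) (n + 2) (n + 1) /
        ((n + 2 : ℕ) * factorialWeight α (n + 2)) ≤
      Real.exp 4 * ((n + 1 : ℕ) : ℝ) ^ (1 - α) := by
  rw [factorialWeight_add_one, div_le_iff₀ (by positivity)]
  calc nonStarSum (factorialWeight α) (n + 2) (n + 1)
      ≤ (n ! : ℝ) ^ (α - 1) * Z (factorialWeight 1) (n + 2) (n + 1) :=
        nonStarSum_factorialWeight_le hα (n + 2) n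
    _ ≤ (n ! : ℝ) ^ (α - 1) * (Real.exp 4 * (n + 2)!) := by
        gcongr
        exact Z_factorialWeight_one_le le_rfl
    _ = Real.exp 4 * (n + 2 : ℕ) * ((n ! : ℝ) ^ (α - 1) * (n + 1)!) := by
        rw [Nat.factorial_succ (n + 1), Nat.cast_mul]
        ring
    _ = _ := by
        rw [← rpow_one_sub_mul_factorial_succ_rpow]
        ring

lemma tendsto_nonStarSum_factorialWeight_div {α : ℝ} (hα : 1 < α) :
    Tendsto (fun n : ℕ ↦ nonStarSum (factorialWeight α) (n + 2) (n + 1) /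
      ((n + 2 : ℕ) * factorialWeight α (n + 2))) atTop (nhds 0) := by
  have rpow_tendsto : Tendsto (fun n : ℕ ↦ ((n + 1 : ℕ) : ℝ) ^ (1 - α)) atTop (nhds 0) := by
    rw [← neg_sub]
    exact (tendsto_rpow_neg_atTop (sub_pos.mpr hα)).comp <|
      tendsto_natCast_atTop_atTop.comp (tendsto_add_atTop_nat 1)
  refine squeeze_zero (fun n ↦ ?_) (nonStarSum_factorialWeight_div_le hα.le)
    (by simpa using rpow_tendsto.const_mul (Real.exp 4))
  have := nonStarSum_factorialWeight_nonneg α (n + 2) (n + 1)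
  rw [factorialWeight_add_one]
  positivity

end

/-- Remark: with `w_n = ((n−1)!)^α`, `α > 1`, `Z_N / ((N−1)!)^α → 1`. -/
theorem stmt_19 (α : ℝ) (hα : 1 < α) :
    Tendsto (fun N : ℕ =>
        (Z (fun n => ((n - 1).factorial : ℝ) ^ α) N (N - 1) / N) /
          (((N - 1).factorial : ℝ)) ^ α)
      atTop (nhds 1) := by
  change Tendsto (fun N : ℕ ↦ Z (factorialWeight α) N (N - 1) / N / factorialWeight α N)
    atTop (nhds 1)
  rw [← tendsto_add_atTop_iff_nat 2]
  have ratio_eq (n : ℕ) :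
      Z (factorialWeight α) (n + 2) (n + 1) / (n + 2 : ℕ) / factorialWeight α (n + 2) =
        1 + nonStarSum (factorialWeight α) (n + 2) (n + 1) /
          ((n + 2 : ℕ) * factorialWeight α (n + 2)) :=
    Z_div_eq_one_add (by simp [factorialWeight]) (by simp) (by simp)
      (by rw [factorialWeight_add_one]; positivity)
  refine (tendsto_congr ratio_eq).mpr ?_
  simpa using (tendsto_nonStarSum_factorialWeight_div hα).const_add 1
end
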